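/- If V is a finite-dimensional vector space of dimension at least 2 over an infinite field K of cardinality κ, then V is not the union of a family of proper subspaces indexed by a set of cardinality strictly less than κ. -/

import Mathlib

universe u

/-!
If `dim V ≥ 2`, then `V` maps onto the plane `K × K`, and the preimages of the `#K + 1` lines
through the origin are hyperplanes of `V`. A proper subspace that contains a hyperplane is equal to
it, so given fewer than `#K + 1` proper subspaces, one of these hyperplanes `H` is contained in none
of them. They all meet `H` in proper subspaces of `H`, which do not cover `H` by induction on the
dimension.
-/

universe v w

section Pencil

open Function

variable {R M : Type*} [Ring R] [AddCommGroup M] [Module R M] (f g : M →ₗ[R] R)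

/-- The pencil spanned by two linear functionals `f` and `g`: the functionals `g - f t`, with `f`
itself as the member at infinity `none`. The parameter `t` acts on the right, so that the members
are left linear over a noncommutative ring. -/
def pencil : Option R → M →ₗ[R] R
  | none => f
  | some t => g - f.smulRight t

theorem pencil_none_apply (x : M) : pencil f g none x = f x := rfl

theorem pencil_some_apply (t : R) (x : M) : pencil f g (some t) x = g x - f x * t := rfl

variable {f g}

theorem pencil_surjective (h : Surjective (f.prod g)) (t : Option R) :
    Surjective (pencil f g t) := by
  intro a
  cases t with
  | none =>
    obtain ⟨x, hx⟩ := h (a, 0)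
    exact ⟨x, congrArg Prod.fst hx⟩
  | some t =>
    obtain ⟨x, hx⟩ := h (0, a)
    obtain ⟨hfx, hgx⟩ : f x = 0 ∧ g x = a := Prod.ext_iff.mp hx
    exact ⟨x, by rw [pencil_some_apply, hfx, hgx, zero_mul, sub_zero]⟩

theorem ker_pencil_injective [Nontrivial R] (h : Surjective (f.prod g)) :
    Injective fun t => LinearMap.ker (pencil f g t) := by
  have separating (t : R) :
      ∃ x ∈ LinearMap.ker (pencil f g (some t)), ∀ s, x ∈ LinearMap.ker (pencil f g s) → s = t := by
    obtain ⟨x, hx⟩ := h (1, t)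
    obtain ⟨hfx, hgx⟩ : f x = 1 ∧ g x = t := Prod.ext_iff.mp hx
    refine ⟨x, by simp [pencil_some_apply, hfx, hgx], fun s hs => ?_⟩
    cases s with
    | none => simp [pencil_none_apply, hfx] at hs
    | some s => simpa [pencil_some_apply, hfx, hgx, sub_eq_zero, eq_comm] using hs
  rintro (_ | s) t (hst : LinearMap.ker _ = LinearMap.ker _)
  · cases t with
    | none => rfl
    | some t =>
      obtain ⟨x, hx, eq_of_mem⟩ := separating t
      exact eq_of_mem none (hst ▸ hx)
  · obtain ⟨x, hx, eq_of_mem⟩ := separating s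
    exact (eq_of_mem t (hst ▸ hx)).symm

end Pencil

section DivisionRing

open Function Module

variable {K V : Type*} [DivisionRing K] [AddCommGroup V] [Module K V]

theorem exists_surjective_prod_of_one_lt_rank (hV : 1 < Module.rank K V) :
    ∃ f g : V →ₗ[K] K, Surjective (f.prod g) := by
  obtain ⟨x, hx⟩ := rank_pos_iff_exists_ne_zero.mp (zero_lt_one.trans hV)
  obtain ⟨y, hxy⟩ := exists_linearIndependent_pair_of_one_lt_rank hV hx
  let e : K × K →ₗ[K] V :=
    (LinearMap.toSpanSingleton K V x).coprod (LinearMap.toSpanSingleton K V y)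
  have he : LinearMap.ker e = ⊥ :=
    LinearMap.ker_eq_bot'.mpr fun a ha =>
      Prod.ext_iff.mpr (LinearIndependent.pair_iff.mp hxy a.1 a.2 ha)
  obtain ⟨p, hp⟩ := e.exists_leftInverse_of_injective he
  exact ⟨LinearMap.fst K K K ∘ₗ p, LinearMap.snd K K K ∘ₗ p,
    fun a => ⟨e a, LinearMap.congr_fun hp a⟩⟩

theorem exists_injective_isCoatom_of_one_lt_rank (hV : 1 < Module.rank K V) :
    ∃ H : Option K → Submodule K V, Injective H ∧ ∀ t, IsCoatom (H t) := by
  obtain ⟨f, g, hfg⟩ := exists_surjective_prod_of_one_lt_rank hV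
  exact ⟨_, ker_pencil_injective hfg,
    fun t => LinearMap.isCoatom_ker_of_surjective (pencil_surjective hfg t)⟩

-- The absence of embeddings says `#ι < #K + 1` without universe lifts.
variable {ι : Type*} [IsEmpty (Option K ↪ ι)]

theorem exists_isCoatom_forall_not_le (hV : 1 < Module.rank K V)
    {W : ι → Submodule K V} (hW : ∀ i, W i ≠ ⊤) :
    ∃ H, IsCoatom H ∧ ∀ i, ¬ H ≤ W i := by
  obtain ⟨H, hH_inj, hH⟩ := exists_injective_isCoatom_of_one_lt_rank hV
  by_contra! hle
  choose i hi using fun t => hle (H t) (hH t)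
  have hWi (t : Option K) : W (i t) = H t := ((hH t).le_iff_eq (hW (i t))).mp (hi t)
  have hi_inj : Injective i := fun s t hst => hH_inj (by rw [← hWi s, ← hWi t, hst])
  exact IsEmpty.false (⟨i, hi_inj⟩ : Option K ↪ ι)

theorem exists_forall_notMem_of_ne_top [Module.Finite K V] {W : ι → Submodule K V}
    (hW : ∀ i, W i ≠ ⊤) : ∃ x, ∀ i, x ∉ W i := by
  induction hn : finrank K V using Nat.strong_induction_on generalizing V with
  | _ n ih =>
    subst hn
    rcases le_or_gt (finrank K V) 1 with hV | hV
    · obtain ⟨x, hx⟩ := (finrank_le_one_iff_top_isPrincipal.mp hV).principal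
      refine ⟨x, fun i hi => hW i (top_unique ?_)⟩
      rwa [hx, Submodule.span_singleton_le_iff_mem]
    · obtain ⟨H, hH, hHW⟩ := exists_isCoatom_forall_not_le (one_lt_rank_of_one_lt_finrank hV) hW
      obtain ⟨x, hx⟩ := ih (finrank K H) (Submodule.finrank_lt hH.1)
        (W := fun i => (W i).comap H.subtype)
        (fun i => mt Submodule.comap_subtype_eq_top.mp (hHW i)) rfl
      exact ⟨x, hx⟩

end DivisionRing

theorem stmt4_general (K : Type u) (V : Type v) [DivisionRing K] [AddCommGroup V] [Module K V]
    [FiniteDimensional K V] (ι : Type w)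
    (hι : Cardinal.lift.{u} (Cardinal.mk ι) < Cardinal.lift.{w} (Cardinal.mk K) + 1)
    (W : ι → Submodule K V) (hW : ∀ i, W i ≠ ⊤) :
    (⋃ i, (W i : Set V)) ≠ Set.univ := by
  have : IsEmpty (Option K ↪ ι) := by
    rw [← not_nonempty_iff, ← Cardinal.lift_mk_le', not_le]
    simpa using hι
  obtain ⟨x, hx⟩ := exists_forall_notMem_of_ne_top hW
  exact (Set.ne_univ_iff_exists_notMem _).mpr ⟨x, by simpa using hx⟩

/-- A finite-dimensional vector space of dimension at least 2 over an infinite field `K`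
of cardinality `κ` is not the union of a family of proper subspaces indexed by a set of
cardinality strictly less than `κ`. -/
theorem stmt4 (K : Type u) (V : Type*) [Field K] [Infinite K] [AddCommGroup V]
    [Module K V] [FiniteDimensional K V] (hV : 2 ≤ Module.finrank K V)
    (ι : Type u) (hι : Cardinal.mk ι < Cardinal.mk K)
    (W : ι → Submodule K V) (hW : ∀ i, W i ≠ ⊤) :
    (⋃ i, (W i : Set V)) ≠ Set.univ :=
  stmt4_general K V ι (by simpa using hι.trans_le (self_le_add_right _ 1)) W hW
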